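/- Let q be a nonzero polynomial over ℂ with deg q ≤ n satisfying the orthogonality relations ∫ t^k · q(t) · h(t) dμ(t) = 0 for every integer k with 0 ≤ k ≤ n − 1. Then there exists a polynomial p over ℂ with deg p ≤ n − 1 such that q(z)·f(z) − p(z) = ∫ q(t)·h(t)/(t − z) dμ(t) for all z with |z| > R₀, and there exists C > 0 with |q(z)f(z) − p(z)| ≤ C·|z|^{−(n+1)} for all z with |z| ≥ 2R₀. (Non-Hermitian orthogonality of the denominator implies the Padé interpolation condition at infinity.) -/

import Mathlib

open MeasureTheory Polynomial

theorem aux_bound (R₀ : ℝ) (h : ℂ → ℂ) (M : ℝ) (hbdd : ∀ t : ℂ, ‖h t‖ ≤ M) (q : Polynomial ℂ) :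
    ∃ B : ℝ, 0 ≤ B ∧ ∀ t ∈ Metric.closedBall (0:ℂ) R₀, ‖q.eval t * h t‖ ≤ B := by
  obtain ⟨K, hK⟩ := (isCompact_closedBall (0:ℂ) R₀).exists_bound_of_continuousOn
    (q.continuous.continuousOn)
  have hM : 0 ≤ M := (norm_nonneg _).trans (hbdd 0)
  refine ⟨|K| * M, by positivity, fun t ht => ?_⟩
  rw [norm_mul]
  exact mul_le_mul ((hK t ht).trans (le_abs_self K)) (hbdd t) (norm_nonneg _) (abs_nonneg _)

theorem aux_ae (R₀ : ℝ) (μ : Measure ℂ) (hμsupp : μ (Metric.closedBall 0 R₀)ᶜ = 0) :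
    ∀ᵐ t ∂μ, t ∈ Metric.closedBall (0:ℂ) R₀ := by
  rw [ae_iff]; exact hμsupp

theorem aux_sub (R₀ : ℝ) (t z : ℂ) (ht : t ∈ Metric.closedBall (0:ℂ) R₀) :
    ‖z‖ - R₀ ≤ ‖t - z‖ := by
  have h1 : ‖t‖ ≤ R₀ := by simpa using ht
  have h2 := norm_sub_norm_le z t
  rw [norm_sub_rev] at h2
  linarith

theorem aux_int (R₀ : ℝ) (μ : Measure ℂ) [IsFiniteMeasure μ]
    (hμsupp : μ (Metric.closedBall 0 R₀)ᶜ = 0)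
    (h : ℂ → ℂ) (hmeas : Measurable h) (M : ℝ) (hbdd : ∀ t : ℂ, ‖h t‖ ≤ M) (q : Polynomial ℂ) :
    Integrable (fun t => q.eval t * h t) μ := by
  obtain ⟨B, hB0, hB⟩ := aux_bound R₀ h M hbdd q
  refine Integrable.of_bound (C := B) (q.continuous.measurable.mul hmeas).aestronglyMeasurable ?_
  filter_upwards [aux_ae R₀ μ hμsupp] with t ht using hB t ht

theorem aux_int2 (R₀ : ℝ) (μ : Measure ℂ) [IsFiniteMeasure μ]
    (hμsupp : μ (Metric.closedBall 0 R₀)ᶜ = 0)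
    (h : ℂ → ℂ) (hmeas : Measurable h) (M : ℝ) (hbdd : ∀ t : ℂ, ‖h t‖ ≤ M) (q : Polynomial ℂ)
    (z : ℂ) (hz : R₀ < ‖z‖) :
    Integrable (fun t => q.eval t * h t / (t - z)) μ := by
  obtain ⟨B, hB0, hB⟩ := aux_bound R₀ h M hbdd q
  refine Integrable.of_bound (C := B / (‖z‖ - R₀)) ((q.continuous.measurable.mul hmeas).div
    (measurable_id.sub_const z)).aestronglyMeasurable ?_
  filter_upwards [aux_ae R₀ μ hμsupp] with t ht
  rw [norm_div]
  exact div_le_div₀ hB0 (hB t ht) (by linarith) (aux_sub R₀ t z ht)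

theorem aux_step (R₀ : ℝ) (μ : Measure ℂ) [IsFiniteMeasure μ]
    (hμsupp : μ (Metric.closedBall 0 R₀)ᶜ = 0)
    (h : ℂ → ℂ) (hmeas : Measurable h) (M : ℝ) (hbdd : ∀ t : ℂ, ‖h t‖ ≤ M) (q : Polynomial ℂ)
    (z : ℂ) (hz : R₀ < ‖z‖) :
    ∫ t, (q * X).eval t * h t / (t - z) ∂μ =
      ∫ t, q.eval t * h t ∂μ + z * ∫ t, q.eval t * h t / (t - z) ∂μ := by
  rw [← integral_const_mul, ← integral_add (aux_int R₀ μ hμsupp h hmeas M hbdd q)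
    ((aux_int2 R₀ μ hμsupp h hmeas M hbdd q z hz).const_mul z)]
  refine integral_congr_ae ?_
  filter_upwards [aux_ae R₀ μ hμsupp] with t ht
  have h1 := aux_sub R₀ t z ht
  have h2 : t - z ≠ 0 := norm_pos_iff.1 (by linarith)
  simp only [eval_mul, eval_X]
  field_simp
  ring

theorem aux_p (R₀ : ℝ) (μ : Measure ℂ) [IsFiniteMeasure μ]
    (hμsupp : μ (Metric.closedBall 0 R₀)ᶜ = 0)
    (h : ℂ → ℂ) (hmeas : Measurable h) (M : ℝ) (hbdd : ∀ t : ℂ, ‖h t‖ ≤ M)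
    (n : ℕ) : ∀ q : Polynomial ℂ, q.natDegree ≤ n →
    ∃ p : Polynomial ℂ, p.degree < (n : ℕ) ∧
      (∀ z : ℂ, R₀ < ‖z‖ →
        q.eval z * (∫ t, h t / (t - z) ∂μ) - p.eval z = ∫ t, q.eval t * h t / (t - z) ∂μ) := by
  induction n with
  | zero =>
    intro q hq
    rw [Polynomial.eq_C_of_natDegree_le_zero hq]
    refine ⟨0, by simp, fun z hz => ?_⟩
    simp only [eval_C, eval_zero, sub_zero, mul_div_assoc]
    rw [integral_const_mul]
  | succ n ih =>
    intro q hq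
    obtain ⟨p, hp, hpz⟩ := ih q.divX (by rw [natDegree_divX_eq_natDegree_tsub_one]; omega)
    refine ⟨p * X - C (∫ t, q.divX.eval t * h t ∂μ), ?_, fun z hz => ?_⟩
    · rw [degree_lt_iff_coeff_zero] at hp ⊢
      intro m hm
      obtain ⟨k, rfl⟩ : ∃ k, m = k + 1 := ⟨m - 1, by omega⟩
      simp [coeff_C, hp k (by omega)]
    · have e := divX_mul_X_add q
      have h1 := aux_step R₀ μ hμsupp h hmeas M hbdd q.divX z hz
      have h2 : ∫ t, q.eval t * h t / (t - z) ∂μ = ∫ t, (q.divX * X).eval t * h t / (t - z) ∂μ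
          + q.coeff 0 * ∫ t, h t / (t - z) ∂μ := by
        have i2 := aux_int2 R₀ μ hμsupp h hmeas M hbdd (C (q.coeff 0)) z hz
        simp only [eval_C, mul_div_assoc] at i2
        rw [← integral_const_mul, ← integral_add
          (aux_int2 R₀ μ hμsupp h hmeas M hbdd _ z hz) i2]
        congr 1
        ext t
        conv_lhs => rw [← e]
        simp only [eval_add, eval_C]
        ring
      have e2 : q.eval z = q.divX.eval z * z + q.coeff 0 := by
        conv_lhs => rw [← e]
        simp
      rw [h2, h1, ← hpz z hz, e2]
      simp only [eval_sub, eval_mul, eval_X, eval_C]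
      ring

theorem aux_orth (R₀ : ℝ) (μ : Measure ℂ) [IsFiniteMeasure μ]
    (hμsupp : μ (Metric.closedBall 0 R₀)ᶜ = 0)
    (h : ℂ → ℂ) (hmeas : Measurable h) (M : ℝ) (hbdd : ∀ t : ℂ, ‖h t‖ ≤ M)
    (q : Polynomial ℂ) (z : ℂ) (hz : R₀ < ‖z‖) (n : ℕ)
    (horth : ∀ k : ℕ, k < n → ∫ t, t ^ k * q.eval t * h t ∂μ = 0) :
    z ^ n * ∫ t, q.eval t * h t / (t - z) ∂μ
      = ∫ t, (q * X ^ n).eval t * h t / (t - z) ∂μ := by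
  induction n with
  | zero => simp
  | succ n ih =>
    have h1 := aux_step R₀ μ hμsupp h hmeas M hbdd (q * X ^ n) z hz
    have h2 : ∫ t, (q * X ^ n).eval t * h t ∂μ = 0 := by
      rw [← horth n (by omega)]
      congr 1
      ext t
      simp only [eval_mul, eval_pow, eval_X]
      ring
    rw [pow_succ (X : Polynomial ℂ), ← mul_assoc, h1, h2, ← ih fun k hk => horth k (by omega)]
    ring

/-- If the nonzero polynomial `q` of degree at most `n` satisfies the
non-Hermitian orthogonality relations `∫ tᵏ q(t) h(t) dμ(t) = 0` for
`0 ≤ k ≤ n − 1`, then there is a polynomial `p` of degree at most `n − 1`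
(i.e. `deg p < n`) such that `q·f − p` equals the function of the second kind
on `‖z‖ > R₀` and satisfies the Padé interpolation bound `O(‖z‖^{−(n+1)})`. -/
theorem orthogonality_implies_pade_interpolation
    (R₀ : ℝ) (hR₀ : 0 < R₀) (μ : Measure ℂ) [IsFiniteMeasure μ]
    (hμsupp : μ (Metric.closedBall 0 R₀)ᶜ = 0)
    (h : ℂ → ℂ) (hmeas : Measurable h) (M : ℝ) (hbdd : ∀ t : ℂ, ‖h t‖ ≤ M)
    (f : ℂ → ℂ) (hf : ∀ z : ℂ, f z = ∫ t, h t / (t - z) ∂μ)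
    (n : ℕ) (q : Polynomial ℂ) (hq0 : q ≠ 0) (hq : q.degree ≤ (n : ℕ))
    (horth : ∀ k : ℕ, k < n → ∫ t, t ^ k * q.eval t * h t ∂μ = 0) :
    ∃ p : Polynomial ℂ, p.degree < (n : ℕ) ∧
      (∀ z : ℂ, R₀ < ‖z‖ →
        q.eval z * f z - p.eval z = ∫ t, q.eval t * h t / (t - z) ∂μ) ∧
      ∃ C : ℝ, 0 < C ∧ ∀ z : ℂ, 2 * R₀ ≤ ‖z‖ →
        ‖q.eval z * f z - p.eval z‖ ≤ C / ‖z‖ ^ (n + 1) := by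
  obtain ⟨p, hp, hpz⟩ := aux_p R₀ μ hμsupp h hmeas M hbdd n q (natDegree_le_of_degree_le hq)
  simp only [← hf] at hpz
  refine ⟨p, hp, hpz, ?_⟩
  obtain ⟨B, hB0, hB⟩ := aux_bound R₀ h M hbdd (q * X ^ n)
  have hm : 0 ≤ μ.real Set.univ := measureReal_nonneg
  refine ⟨2 * B * μ.real Set.univ + 1, by positivity, fun z hz => ?_⟩
  have hz1 : R₀ < ‖z‖ := by linarith
  have hz0 : 0 < ‖z‖ := by linarith
  rw [hpz z hz1]
  have key := aux_orth R₀ μ hμsupp h hmeas M hbdd q z hz1 n horth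
  have hb : ‖∫ t, (q * X ^ n).eval t * h t / (t - z) ∂μ‖ ≤ B / (‖z‖ / 2) * μ.real Set.univ := by
    apply norm_integral_le_of_norm_le_const
    filter_upwards [aux_ae R₀ μ hμsupp] with t ht
    rw [norm_div]
    exact div_le_div₀ hB0 (hB t ht) (by linarith) (by linarith [aux_sub R₀ t z ht])
  rw [← key, norm_mul, norm_pow] at hb
  rw [le_div_iff₀ (by positivity)]
  calc _ = (‖z‖ ^ n * ‖∫ t, q.eval t * h t / (t - z) ∂μ‖) * ‖z‖ := by ring
    _ ≤ (B / (‖z‖ / 2) * μ.real Set.univ) * ‖z‖ := by gcongr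
    _ = 2 * B * μ.real Set.univ := by field_simp
    _ ≤ _ := by linarith
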